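/- Fix an integer d ≥ 1, p ∈ (1,∞), a penalty function φ, and let (μ_t)_{t≥0} be a convolution semigroup in 𝒫_p(ℝ^d). Then for every f, g ∈ C₀(ℝ^d), t ≥ 0, and n ∈ ℕ: (i) 𝒮^{n+1}(t)f(x) ≤ 𝒮^n(t)f(x) for all x ∈ ℝ^d; (ii) ‖𝒮^n(t)f − 𝒮^n(t)g‖_∞ ≤ ‖f − g‖_∞; (iii) for all ε, δ > 0, if |f(x) − f(y)| ≤ ε whenever |x − y| ≤ δ, then |𝒮^n(t)f(x) − 𝒮^n(t)f(y)| ≤ ε whenever |x − y| ≤ δ. -/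

import Mathlib

open MeasureTheory Filter Topology ENNReal NNReal Set ZeroAtInfty
noncomputable section

/-- Euclidean space ℝ^d. -/
abbrev Ed (d : ℕ) := EuclideanSpace ℝ (Fin d)

/-- `𝒫_p(ℝ^d)`: Borel probability measures with finite `p`-th moment. -/
def MemPp {d : ℕ} (p : ℝ) (μ : Measure (Ed d)) : Prop :=
  IsProbabilityMeasure μ ∧ ∫⁻ x, (‖x‖₊ : ℝ≥0∞) ^ p ∂μ < ∞

/-- `γ` is a coupling of `μ` and `ν`. -/
def IsCoupling {d : ℕ} (γ : Measure (Ed d × Ed d)) (μ ν : Measure (Ed d)) : Prop :=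
  γ.map Prod.fst = μ ∧ γ.map Prod.snd = ν

/-- The `p`-Wasserstein distance `𝒲_p(μ, ν)`. -/
def Wp {d : ℕ} (p : ℝ) (μ ν : Measure (Ed d)) : ℝ :=
  (⨅ γ ∈ {γ : Measure (Ed d × Ed d) | IsCoupling γ μ ν},
    (∫⁻ q, (‖q.2 - q.1‖₊ : ℝ≥0∞) ^ p ∂γ) ^ (1 / p)).toReal

/-- The scaled penalty `φ_t(r) = t·φ(r/t)` for `t > 0`; `φ_0(0) = 0`, `φ_0(r) = ∞` for `r > 0`. -/
def phit (φ : ℝ≥0 → ℝ≥0∞) (t : ℝ) (r : ℝ≥0) : ℝ≥0∞ :=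
  if 0 < t then (t.toNNReal : ℝ≥0∞) * φ (r / t.toNNReal) else (if r = 0 then 0 else ∞)

/-- `φ` is a penalty function: lower semicontinuous, convex, increasing, not constant,
`φ(0) = 0`, and `x ↦ φ(x^{1/p})` is convex. -/
structure IsPenalty (p : ℝ) (φ : ℝ≥0 → ℝ≥0∞) : Prop where
  lsc : LowerSemicontinuous φ
  convex : ∀ a b l m : ℝ≥0, l + m = 1 →
    φ (l * a + m * b) ≤ (l : ℝ≥0∞) * φ a + (m : ℝ≥0∞) * φ b
  mono : Monotone φ
  not_const : ∃ a b, φ a ≠ φ b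
  map_zero : φ 0 = 0
  convex_rpow : ∀ a b l m : ℝ≥0, l + m = 1 →
    φ ((l * a + m * b) ^ (1 / p)) ≤ (l : ℝ≥0∞) * φ (a ^ (1 / p)) + (m : ℝ≥0∞) * φ (b ^ (1 / p))

/-- The convex conjugate `φ*(y) = sup_{x ≥ 0} (xy − φ(x))`. -/
def phiStar (φ : ℝ≥0 → ℝ≥0∞) (y : ℝ≥0) : ℝ≥0∞ :=
  ⨆ x : ℝ≥0, ((x * y : ℝ≥0) : ℝ≥0∞) - φ x

/-- The one-step operator `S(t)f(x) = sup_ν ( ∫ f(x+y) ν(dy) − φ_t(𝒲_p(μ_t, ν)) )`. -/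
def Sop {d : ℕ} (p : ℝ) (φ : ℝ≥0 → ℝ≥0∞) (μt : Measure (Ed d)) (t : ℝ)
    (f : Ed d → ℝ) (x : Ed d) : ℝ :=
  sSup { r : ℝ | ∃ ν : Measure (Ed d), MemPp p ν ∧ ∃ c : ℝ, 0 ≤ c ∧
    phit φ t (Wp p μt ν).toNNReal ≤ ENNReal.ofReal c ∧ r = (∫ y, f (x + y) ∂ν) - c }

/-- The iterated operator `𝒮ⁿ(t) = S(2⁻ⁿ)^{∘ k} ∘ S(t − k·2⁻ⁿ)`, `k = ⌊2ⁿ t⌋`. -/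
def SiterN {d : ℕ} (p : ℝ) (φ : ℝ≥0 → ℝ≥0∞) (μ : ℝ → Measure (Ed d)) (n : ℕ) (t : ℝ)
    (f : Ed d → ℝ) : Ed d → ℝ :=
  (fun g => Sop p φ (μ ((2 : ℝ) ^ n)⁻¹) ((2 : ℝ) ^ n)⁻¹ g)^[⌊(2:ℝ)^n * t⌋₊]
    (Sop p φ (μ (t - ⌊(2:ℝ)^n * t⌋₊ * ((2:ℝ)^n)⁻¹)) (t - ⌊(2:ℝ)^n * t⌋₊ * ((2:ℝ)^n)⁻¹) f)

/-- The limiting operator `𝒮(t)f = lim_n 𝒮ⁿ(t)f` (a decreasing limit, i.e. an infimum). -/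
def Slim {d : ℕ} (p : ℝ) (φ : ℝ≥0 → ℝ≥0∞) (μ : ℝ → Measure (Ed d)) (t : ℝ)
    (f : Ed d → ℝ) (x : Ed d) : ℝ :=
  ⨅ n : ℕ, SiterN p φ μ n t f x

/-- `f ∈ C₀(ℝ^d)`: continuous and vanishing at infinity. -/
def IsC0 {d : ℕ} (f : Ed d → ℝ) : Prop :=
  Continuous f ∧ Tendsto f (cocompact (Ed d)) (𝓝 0)

/-- `(μ_t)_{t ≥ 0}` is a convolution semigroup in `𝒫_p(ℝ^d)`. -/
def IsConvSemigroup {d : ℕ} (p : ℝ) (μ : ℝ → Measure (Ed d)) : Prop :=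
  μ 0 = Measure.dirac 0 ∧ (∀ s t : ℝ, 0 ≤ s → 0 ≤ t → μ (s + t) = (μ s).conv (μ t)) ∧
    ∀ t : ℝ, 0 ≤ t → MemPp p (μ t)

/-- `𝒲_p(μ_t, δ_0) → 0` as `t ↓ 0`. -/
def WContinuousAtZero {d : ℕ} (p : ℝ) (μ : ℝ → Measure (Ed d)) : Prop :=
  Tendsto (fun t => Wp p (μ t) (Measure.dirac 0)) (𝓝[>] (0:ℝ)) (𝓝 0)

/-- The semigroup of the underlying Lévy process, `S^μ(t)f(x) = ∫ f(x+y) μ_t(dy)`. -/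
def Smu {d : ℕ} (μ : ℝ → Measure (Ed d)) (t : ℝ) (f : Ed d → ℝ) (x : Ed d) : ℝ :=
  ∫ y, f (x + y) ∂(μ t)

/-- `f ∈ D(A^μ)` with `A^μ f = Af`: `(S^μ(t)f − f)/t → Af` uniformly as `t ↓ 0`. -/
def HasGenerator {d : ℕ} (μ : ℝ → Measure (Ed d)) (f Af : Ed d → ℝ) : Prop :=
  TendstoUniformly (fun t x => (Smu μ t f x - f x) / t) Af (𝓝[>] (0:ℝ))

/-- `f ∈ C₀¹(ℝ^d)`: continuously differentiable, vanishing at infinity, with gradient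
vanishing at infinity. -/
def IsC01 {d : ℕ} (f : Ed d → ℝ) : Prop :=
  IsC0 f ∧ ContDiff ℝ 1 f ∧ Tendsto (fun x => gradient f x) (cocompact (Ed d)) (𝓝 0)

/-!
Everything rests on the inequality `S(s) S(t) f ≤ S(s+t) f`. Given `ν` and near-optimal measures
`κ y` for the inner supremum at `x + y`, glue them to the law `ν ⋆ κ` of `Y + Z`, where `Y ∼ ν` and
`Z ∼ κ Y`. Gluing couplings in the same way, Minkowski's inequality yields
`𝒲_p(μ_s ∗ μ_t, ν ⋆ κ) ≤ 𝒲_p(μ_s, ν) + (∫ 𝒲_p(μ_t, κ y)^p ν(dy))^{1/p}`. The perspective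
`(t, r) ↦ φ_t(r)` is subadditive because `φ` is convex, and Jensen's inequality for the convex
function `φ_t(·^{1/p})` bounds the penalty of `ν ⋆ κ` by
`φ_s(𝒲_p(μ_s, ν)) + ∫ φ_t(𝒲_p(μ_t, κ y)) ν(dy)`.
The selection `κ` can be taken to be a simple function, since `f` and `S(t) f` share a modulus
`|f a - f b| ≤ ε + L |a - b|` and `ν` has a finite first moment. Splitting each step of length
`2^{-n}` into two halves then gives monotonicity in `n`.

Contractivity and preservation of the modulus of continuity are both instances of
`|S(t) f (x) - S(t) g (y)| ≤ sup_z |f (x + z) - g (y + z)|`, which survives iteration.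
-/

section Jensen

/-- The part of the epigraph of `Φ` in the closed quadrant, as a subset of the real plane: the form
in which closed convex sets absorb Bochner integrals. -/
def realEpigraph (Φ : ℝ≥0 → ℝ≥0∞) : Set (ℝ × ℝ) :=
  {q | 0 ≤ q.1 ∧ 0 ≤ q.2 ∧ Φ q.1.toNNReal ≤ ENNReal.ofReal q.2}

variable {Φ : ℝ≥0 → ℝ≥0∞}

lemma convex_realEpigraph (hΦ : ConvexOn ℝ≥0 univ Φ) : Convex ℝ (realEpigraph Φ) := by
  rintro ⟨x, u⟩ ⟨hx, hu, hxu⟩ ⟨y, v⟩ ⟨hy, hv, hyv⟩ l m hl hm hlm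
  lift x to ℝ≥0 using hx
  lift y to ℝ≥0 using hy
  lift u to ℝ≥0 using hu
  lift v to ℝ≥0 using hv
  lift l to ℝ≥0 using hl
  lift m to ℝ≥0 using hm
  simp only [Real.toNNReal_coe, ENNReal.ofReal_coe_nnreal] at hxu hyv
  have hcomb : Φ (l * x + m * y) ≤ ((l * u + m * v : ℝ≥0) : ℝ≥0∞) :=
    calc Φ (l * x + m * y) ≤ l * Φ x + m * Φ y :=
          hΦ.2 (mem_univ x) (mem_univ y) zero_le zero_le (by exact_mod_cast hlm)
      _ ≤ l * u + m * v := by gcongr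
      _ = ((l * u + m * v : ℝ≥0) : ℝ≥0∞) := by push_cast; rfl
  change (0 : ℝ) ≤ (l * x + m * y : ℝ≥0) ∧ (0 : ℝ) ≤ (l * u + m * v : ℝ≥0) ∧
    Φ ((l * x + m * y : ℝ≥0) : ℝ).toNNReal ≤ ENNReal.ofReal (l * u + m * v : ℝ≥0)
  rw [Real.toNNReal_coe, ENNReal.ofReal_coe_nnreal]
  exact ⟨NNReal.coe_nonneg _, NNReal.coe_nonneg _, hcomb⟩

lemma isClosed_realEpigraph (hΦ : LowerSemicontinuous Φ) : IsClosed (realEpigraph Φ) := by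
  have hepi : IsClosed {q : ℝ × ℝ | Φ q.1.toNNReal ≤ ENNReal.ofReal q.2} :=
    hΦ.isClosed_epigraph.preimage
      ((continuous_real_toNNReal.comp continuous_fst).prodMk
        (ENNReal.continuous_ofReal.comp continuous_snd))
  exact (isClosed_le continuous_const continuous_fst).inter
    ((isClosed_le continuous_const continuous_snd).inter hepi)

lemma map_toNNReal_lintegral_le_lintegral_map {Ω : Type*} [MeasurableSpace Ω] {ν : Measure Ω}
    [IsProbabilityMeasure ν] (hconv : ConvexOn ℝ≥0 univ Φ) (hlsc : LowerSemicontinuous Φ)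
    {X : Ω → ℝ≥0∞} (hX : AEMeasurable X ν) (hXtop : ∫⁻ ω, X ω ∂ν ≠ ∞) :
    Φ (∫⁻ ω, X ω ∂ν).toNNReal ≤ ∫⁻ ω, Φ (X ω).toNNReal ∂ν := by
  by_cases hΦtop : ∫⁻ ω, Φ (X ω).toNNReal ∂ν = ∞
  · exact hΦtop ▸ le_top
  have hΦX : AEMeasurable (fun ω => Φ (X ω).toNNReal) ν :=
    hlsc.measurable.comp_aemeasurable hX.ennreal_toNNReal
  have hΦX_lt_top := ae_lt_top' hΦX hΦtop
  have hX_int := integrable_toReal_of_lintegral_ne_top hX hXtop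
  have hΦX_int := integrable_toReal_of_lintegral_ne_top hΦX hΦtop
  have hmem : ∀ᵐ ω ∂ν, ((X ω).toReal, (Φ (X ω).toNNReal).toReal) ∈ realEpigraph Φ := by
    filter_upwards [hΦX_lt_top] with ω hω
    refine ⟨toReal_nonneg, toReal_nonneg, ?_⟩
    rw [toNNReal_toReal_eq, ENNReal.ofReal_toReal hω.ne]
  have hmean := (convex_realEpigraph hconv).integral_mem (isClosed_realEpigraph hlsc) hmem
    (hX_int.prodMk hΦX_int)
  rw [integral_pair hX_int hΦX_int, integral_toReal hX (ae_lt_top' hX hXtop),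
    integral_toReal hΦX hΦX_lt_top] at hmean
  simpa only [toNNReal_toReal_eq, ENNReal.ofReal_toReal hΦtop] using hmean.2.2

end Jensen

section ScaledPenalty

variable {p : ℝ} {φ : ℝ≥0 → ℝ≥0∞}

lemma monotone_phit (hφ : Monotone φ) (t : ℝ) : Monotone (phit φ t) := by
  intro a b hab
  unfold phit
  split_ifs with ht ha hb hb
  · gcongr
    exact hφ (by gcongr)
  · exact le_rfl
  · exact bot_le
  · exact absurd (le_antisymm (hab.trans hb.le) bot_le) ha
  · exact le_rfl

lemma phit_zero_right (hφ : φ 0 = 0) (t : ℝ) : phit φ t 0 = 0 := by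
  simp [phit, hφ]

lemma lowerSemicontinuous_phit (hφ : LowerSemicontinuous φ) (t : ℝ) :
    LowerSemicontinuous (phit φ t) := by
  by_cases ht : 0 < t
  · have hscale : LowerSemicontinuous fun r => φ (r / t.toNNReal) :=
      hφ.comp (by fun_prop)
    have hmul : Continuous fun u : ℝ≥0∞ => (t.toNNReal : ℝ≥0∞) * u :=
      ENNReal.continuous_const_mul coe_ne_top
    have hphit : phit φ t = fun r => (t.toNNReal : ℝ≥0∞) * φ (r / t.toNNReal) := by
      simp [funext_iff, phit, ht]
    exact hphit ▸ hmul.comp_lowerSemicontinuous hscale fun _ _ h => mul_le_mul' le_rfl h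
  · have hphit : phit φ t = ({0}ᶜ : Set ℝ≥0).indicator fun _ => ∞ := by
      ext r
      by_cases hr : r = 0 <;> simp [phit, ht, hr]
    exact hphit ▸ isOpen_compl_singleton.lowerSemicontinuous_indicator zero_le

lemma IsPenalty.phit_add_le (hφ : IsPenalty p φ) {s t : ℝ} (hs : 0 ≤ s) (ht : 0 ≤ t)
    (a b : ℝ≥0) : phit φ (s + t) (a + b) ≤ phit φ s a + phit φ t b := by
  rcases hs.eq_or_lt with rfl | hs
  · by_cases ha : a = 0 <;> simp [phit, ha]
  rcases ht.eq_or_lt with rfl | ht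
  · by_cases hb : b = 0 <;> simp [phit, hb]
  simp only [phit, hs, ht, add_pos hs ht, if_true, Real.toNNReal_add hs.le ht.le]
  have hS : 0 < s.toNNReal := Real.toNNReal_pos.2 hs
  have hT : 0 < t.toNNReal := Real.toNNReal_pos.2 ht
  generalize s.toNNReal = S at *
  generalize t.toNNReal = T at *
  have hST : S + T ≠ 0 := (add_pos hS hT).ne'
  have hcomb : S / (S + T) * (a / S) + T / (S + T) * (b / T) = (a + b) / (S + T) := by
    field_simp
  calc ((S + T : ℝ≥0) : ℝ≥0∞) * φ ((a + b) / (S + T))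
      ≤ ((S + T : ℝ≥0) : ℝ≥0∞) * (((S / (S + T) : ℝ≥0) : ℝ≥0∞) * φ (a / S)
          + ((T / (S + T) : ℝ≥0) : ℝ≥0∞) * φ (b / T)) := by
        gcongr
        exact hcomb ▸ hφ.convex _ _ _ _ (by rw [← add_div, div_self hST])
    _ = S * φ (a / S) + T * φ (b / T) := by
        rw [mul_add, ← mul_assoc, ← mul_assoc, ← ENNReal.coe_mul, ← ENNReal.coe_mul,
          mul_div_cancel₀ _ hST, mul_div_cancel₀ _ hST]

lemma IsPenalty.convexOn_phit_rpow (hφ : IsPenalty p φ) (hp : p ≠ 0) (t : ℝ) :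
    ConvexOn ℝ≥0 univ fun x => phit φ t (x ^ (1 / p)) := by
  refine ⟨convex_univ, fun a _ b _ l m _ _ hlm => ?_⟩
  change phit φ t ((l * a + m * b) ^ (1 / p)) ≤
    l * phit φ t (a ^ (1 / p)) + m * phit φ t (b ^ (1 / p))
  by_cases ht : 0 < t
  · have hscale (x : ℝ≥0) : x ^ (1 / p) / t.toNNReal = (x / t.toNNReal ^ p) ^ (1 / p) := by
      rw [NNReal.div_rpow, ← NNReal.rpow_mul, mul_one_div_cancel hp, NNReal.rpow_one]
    simp only [phit, ht, if_true, hscale, add_div, mul_div_assoc]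
    calc _ ≤ (t.toNNReal : ℝ≥0∞) * _ := mul_le_mul_right (hφ.convex_rpow _ _ l m hlm) _
      _ = _ := by ring
  · simp only [phit, ht, if_false, NNReal.rpow_eq_zero (one_div_ne_zero hp)]
    by_cases hla : l * a = 0
    · by_cases hmb : m * b = 0
      · simp [hla, hmb]
      · simp [right_ne_zero_of_mul hmb, left_ne_zero_of_mul hmb]
    · simp [right_ne_zero_of_mul hla, left_ne_zero_of_mul hla]

end ScaledPenalty

section KernelConv

open ProbabilityTheory

/-- The law of `Y + Z` when `Y` has law `ν` and, conditionally on `Y = y`, `Z` has law `K y`.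
A constant kernel gives back the convolution. -/
def kernelConv {E : Type*} [Add E] [MeasurableSpace E] (ν : Measure E) (K : Kernel E E) :
    Measure E :=
  (ν ⊗ₘ K).map fun z => z.1 + z.2

/-- A measure-valued simple function, regarded as a kernel. Restricting to these kernels avoids
measurable selections. -/
def simpleKernel {α β : Type*} [MeasurableSpace α] [MeasurableSpace β]
    (κ : SimpleFunc α (Measure β)) : Kernel α β :=
  ⟨κ, κ.measurable⟩

lemma isMarkovKernel_simpleKernel {α β : Type*} [MeasurableSpace α] [MeasurableSpace β]
    {κ : SimpleFunc α (Measure β)} (hκ : ∀ a, IsProbabilityMeasure (κ a)) :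
    IsMarkovKernel (simpleKernel κ) :=
  ⟨hκ⟩

variable {E : Type*} [Add E] [MeasurableSpace E] [MeasurableAdd₂ E]
  {ν : Measure E} {K : Kernel E E}

lemma isProbabilityMeasure_kernelConv [IsProbabilityMeasure ν] [IsMarkovKernel K] :
    IsProbabilityMeasure (kernelConv ν K) :=
  Measure.isProbabilityMeasure_map (by fun_prop)

lemma lintegral_kernelConv [SFinite ν] [IsSFiniteKernel K] {f : E → ℝ≥0∞} (hf : Measurable f) :
    ∫⁻ w, f w ∂kernelConv ν K = ∫⁻ y, ∫⁻ z, f (y + z) ∂K y ∂ν := by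
  rw [kernelConv, lintegral_map hf (by fun_prop), Measure.lintegral_compProd (by fun_prop)]

lemma integral_kernelConv [SFinite ν] [IsSFiniteKernel K] {f : E → ℝ}
    (hf : Integrable f (kernelConv ν K)) :
    ∫ w, f w ∂kernelConv ν K = ∫ y, ∫ z, f (y + z) ∂K y ∂ν := by
  rw [kernelConv, integral_map (by fun_prop) hf.aestronglyMeasurable]
  exact Measure.integral_compProd (hf.comp_measurable (by fun_prop))

lemma lintegral_rpow_kernelConv_le [SFinite ν] [IsMarkovKernel K] {N : E → ℝ≥0∞}
    (hN : Measurable N) (hadd : ∀ y z, N (y + z) ≤ N y + N z) {p : ℝ} (hp : 1 ≤ p) :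
    (∫⁻ w, N w ^ p ∂kernelConv ν K) ^ (1 / p) ≤
      (∫⁻ y, N y ^ p ∂ν) ^ (1 / p) + (∫⁻ y, ∫⁻ z, N z ^ p ∂K y ∂ν) ^ (1 / p) := by
  have hfst : ∫⁻ q, N q.1 ^ p ∂(ν ⊗ₘ K) = ∫⁻ y, N y ^ p ∂ν := by
    rw [Measure.lintegral_compProd (by fun_prop)]
    simp
  have hsnd : ∫⁻ q, N q.2 ^ p ∂(ν ⊗ₘ K) = ∫⁻ y, ∫⁻ z, N z ^ p ∂K y ∂ν :=
    Measure.lintegral_compProd (by fun_prop)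
  calc (∫⁻ w, N w ^ p ∂kernelConv ν K) ^ (1 / p)
      = (∫⁻ q, N (q.1 + q.2) ^ p ∂(ν ⊗ₘ K)) ^ (1 / p) := by
        rw [kernelConv, lintegral_map (by fun_prop) (by fun_prop)]
    _ ≤ (∫⁻ q, (N q.1 + N q.2) ^ p ∂(ν ⊗ₘ K)) ^ (1 / p) := by
        gcongr with q
        exact hadd q.1 q.2
    _ ≤ (∫⁻ q, N q.1 ^ p ∂(ν ⊗ₘ K)) ^ (1 / p) + (∫⁻ q, N q.2 ^ p ∂(ν ⊗ₘ K)) ^ (1 / p) :=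
        ENNReal.lintegral_Lp_add_le (by fun_prop) (by fun_prop) hp
    _ = _ := by rw [hfst, hsnd]

end KernelConv

section Wasserstein

open ProbabilityTheory

variable {d : ℕ} {p : ℝ} {μ ν μ₁ μ₂ : Measure (Ed d)} {γ : Measure (Ed d × Ed d)}

/-- The `L^p` transport cost of a coupling. -/
def couplingCost (p : ℝ) (γ : Measure (Ed d × Ed d)) : ℝ≥0∞ :=
  (∫⁻ q, (‖q.2 - q.1‖₊ : ℝ≥0∞) ^ p ∂γ) ^ (1 / p)

/-- The `p`-Wasserstein distance with values in `[0, ∞]`; `Wp` is its real part, which is `0`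
where this is infinite. -/
def eWp (p : ℝ) (μ ν : Measure (Ed d)) : ℝ≥0∞ :=
  ⨅ γ ∈ {γ : Measure (Ed d × Ed d) | IsCoupling γ μ ν}, couplingCost p γ

lemma toNNReal_Wp (p : ℝ) (μ ν : Measure (Ed d)) : (Wp p μ ν).toNNReal = (eWp p μ ν).toNNReal :=
  toNNReal_toReal_eq _

lemma eWp_le_couplingCost (hγ : IsCoupling γ μ ν) : eWp p μ ν ≤ couplingCost p γ :=
  iInf₂_le γ hγ

lemma couplingCost_rpow (hp : p ≠ 0) (γ : Measure (Ed d × Ed d)) :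
    couplingCost p γ ^ p = ∫⁻ q, (‖q.2 - q.1‖₊ : ℝ≥0∞) ^ p ∂γ := by
  rw [couplingCost, one_div, ENNReal.rpow_inv_rpow hp]

lemma isCoupling_prod [IsProbabilityMeasure μ] [IsProbabilityMeasure ν] :
    IsCoupling (μ.prod ν) μ ν := by
  simp [IsCoupling, Measure.map_fst_prod, Measure.map_snd_prod]

lemma IsCoupling.isProbabilityMeasure [IsProbabilityMeasure μ] (hγ : IsCoupling γ μ ν) :
    IsProbabilityMeasure γ :=
  have : IsProbabilityMeasure (γ.map Prod.fst) := hγ.1.symm ▸ inferInstance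
  Measure.isProbabilityMeasure_of_map Prod.fst

lemma exists_isCoupling_couplingCost_le [IsProbabilityMeasure μ] [IsProbabilityMeasure ν]
    {ε : ℝ≥0∞} (hε : ε ≠ 0) : ∃ γ, IsCoupling γ μ ν ∧ couplingCost p γ ≤ eWp p μ ν + ε := by
  by_cases htop : eWp p μ ν = ∞
  · exact ⟨_, isCoupling_prod, by simp [htop]⟩
  have hlt : eWp p μ ν < eWp p μ ν + ε := ENNReal.lt_add_right htop hε
  obtain ⟨γ, hγ, hcost⟩ := by simpa only [eWp, iInf_lt_iff] using hlt
  exact ⟨γ, hγ, hcost.le⟩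

lemma eWp_self (hp : 0 < p) (μ : Measure (Ed d)) : eWp p μ μ = 0 := by
  have hdiag : IsCoupling (μ.map fun x => (x, x)) μ μ := by
    constructor
    · rw [Measure.map_map measurable_fst (by fun_prop)]
      exact Measure.map_id
    · rw [Measure.map_map measurable_snd (by fun_prop)]
      exact Measure.map_id
  refine le_antisymm ((eWp_le_couplingCost hdiag).trans ?_) bot_le
  rw [couplingCost, lintegral_map (by fun_prop) (by fun_prop)]
  simp [hp]

lemma eWp_ne_top (hp : 1 ≤ p) (hμ : MemPp p μ) (hν : MemPp p ν) : eWp p μ ν ≠ ∞ := by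
  have := hμ.1
  have := hν.1
  have : 0 ≤ p := by linarith
  have hfst : ∫⁻ q, (‖q.1‖₊ : ℝ≥0∞) ^ p ∂μ.prod ν < ∞ := by
    rw [lintegral_prod _ (by fun_prop)]
    simpa using hμ.2
  have hsnd : ∫⁻ q, (‖q.2‖₊ : ℝ≥0∞) ^ p ∂μ.prod ν < ∞ := by
    rw [lintegral_prod _ (by fun_prop)]
    simpa using hν.2
  refine ((eWp_le_couplingCost isCoupling_prod).trans_lt
    (ENNReal.rpow_lt_top_of_nonneg (by positivity) (ne_of_lt ?_))).ne
  calc ∫⁻ q, (‖q.2 - q.1‖₊ : ℝ≥0∞) ^ p ∂μ.prod ν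
      ≤ ∫⁻ q, ((‖q.2‖₊ : ℝ≥0∞) + ‖q.1‖₊) ^ p ∂μ.prod ν := by
        gcongr with q
        exact_mod_cast nnnorm_sub_le q.2 q.1
    _ < ∞ := ENNReal.lintegral_rpow_add_lt_top_of_lintegral_rpow_lt_top (by fun_prop) hsnd hfst hp

lemma IsCoupling.kernelConv [SFinite γ] [SFinite ν] [SFinite μ₂]
    {K : Kernel (Ed d) (Ed d)} {G : Kernel (Ed d) (Ed d × Ed d)} [IsSFiniteKernel K]
    [IsSFiniteKernel G] (hγ : IsCoupling γ μ₁ ν) (hG : ∀ y, IsCoupling (G y) μ₂ (K y)) :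
    IsCoupling (kernelConv γ (G.comap Prod.snd measurable_snd)) (μ₁.conv μ₂)
      (kernelConv ν K) := by
  constructor
  · refine Measure.ext_of_lintegral _ fun f hf => ?_
    rw [lintegral_map hf measurable_fst, lintegral_kernelConv (by fun_prop),
      Measure.lintegral_conv hf, ← hγ.1, lintegral_map (by fun_prop) measurable_fst]
    refine lintegral_congr fun q => ?_
    rw [← (hG q.2).1, lintegral_map (by fun_prop) measurable_fst]
    rfl
  · refine Measure.ext_of_lintegral _ fun f hf => ?_
    have hinner : Measurable fun y => ∫⁻ z, f (y + z) ∂K y :=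
      Measurable.lintegral_kernel_prod_right' (f := fun w : Ed d × Ed d => f (w.1 + w.2))
        (by fun_prop)
    rw [lintegral_map hf measurable_snd, lintegral_kernelConv (by fun_prop),
      lintegral_kernelConv hf, ← hγ.2, lintegral_map hinner measurable_snd]
    refine lintegral_congr fun q => ?_
    rw [← (hG q.2).2, lintegral_map (by fun_prop) measurable_snd]
    rfl

lemma eWp_conv_kernelConv_le_of_isCoupling (hp : 1 ≤ p) [SFinite γ] [SFinite ν]
    [SFinite μ₂] {K : Kernel (Ed d) (Ed d)} {G : Kernel (Ed d) (Ed d × Ed d)} [IsSFiniteKernel K]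
    [IsMarkovKernel G] (hγ : IsCoupling γ μ₁ ν) (hG : ∀ y, IsCoupling (G y) μ₂ (K y)) :
    eWp p (μ₁.conv μ₂) (kernelConv ν K) ≤
      couplingCost p γ + (∫⁻ y, couplingCost p (G y) ^ p ∂ν) ^ (1 / p) := by
  have hsub (q r : Ed d × Ed d) : (‖(q + r).2 - (q + r).1‖₊ : ℝ≥0∞) ≤
      ‖q.2 - q.1‖₊ + ‖r.2 - r.1‖₊ := by
    rw [Prod.snd_add, Prod.fst_add, add_sub_add_comm]
    exact_mod_cast nnnorm_add_le _ _
  have hcost : Measurable fun y => ∫⁻ r, (‖r.2 - r.1‖₊ : ℝ≥0∞) ^ p ∂G y :=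
    Measurable.lintegral_kernel (by fun_prop)
  refine (eWp_le_couplingCost (hγ.kernelConv hG)).trans
    ((lintegral_rpow_kernelConv_le (by fun_prop) hsub hp).trans_eq ?_)
  simp only [couplingCost_rpow (by linarith : p ≠ 0)]
  rw [← hγ.2, lintegral_map hcost measurable_snd]
  rfl

lemma eWp_conv_kernelConv_le (hp : 1 ≤ p) [IsProbabilityMeasure μ₁] [IsProbabilityMeasure μ₂]
    [IsProbabilityMeasure ν] {κ : SimpleFunc (Ed d) (Measure (Ed d))}
    (hκ : ∀ y, IsProbabilityMeasure (κ y)) :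
    eWp p (μ₁.conv μ₂) (kernelConv ν (simpleKernel κ)) ≤
      eWp p μ₁ ν + (∫⁻ y, eWp p μ₂ (κ y) ^ p ∂ν) ^ (1 / p) := by
  have hp0 : 0 < p := by linarith
  refine ENNReal.le_of_forall_pos_le_add fun ε hε _ => ?_
  have hε2 : ((ε / 2 : ℝ≥0) : ℝ≥0∞) ≠ 0 := by exact_mod_cast (half_pos hε).ne'
  obtain ⟨γ, hγ, hγcost⟩ := exists_isCoupling_couplingCost_le (p := p) (μ := μ₁) (ν := ν) hε2
  choose! G hG hGcost using fun (m : Measure (Ed d)) (_ : IsProbabilityMeasure m) =>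
    exists_isCoupling_couplingCost_le (p := p) (μ := μ₂) (ν := m) hε2
  have := hγ.isProbabilityMeasure
  have := isMarkovKernel_simpleKernel hκ
  have := isMarkovKernel_simpleKernel (κ := κ.map G) fun y =>
    (hG (κ y) (hκ y)).isProbabilityMeasure
  calc eWp p (μ₁.conv μ₂) (kernelConv ν (simpleKernel κ))
      ≤ couplingCost p γ + (∫⁻ y, couplingCost p (simpleKernel (κ.map G) y) ^ p ∂ν) ^ (1 / p) :=
        eWp_conv_kernelConv_le_of_isCoupling hp hγ fun y => hG (κ y) (hκ y)
    _ ≤ (eWp p μ₁ ν + (ε / 2 : ℝ≥0)) +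
          (∫⁻ y, (eWp p μ₂ (κ y) + (ε / 2 : ℝ≥0)) ^ p ∂ν) ^ (1 / p) := by
        gcongr with y
        exact hGcost (κ y) (hκ y)
    _ ≤ (eWp p μ₁ ν + (ε / 2 : ℝ≥0)) +
          ((∫⁻ y, eWp p μ₂ (κ y) ^ p ∂ν) ^ (1 / p) + (ε / 2 : ℝ≥0)) := by
        gcongr
        refine (ENNReal.lintegral_Lp_add_le (κ.map (eWp p μ₂)).measurable.aemeasurable
          aemeasurable_const hp).trans_eq ?_
        simp [hp0.ne']
    _ = eWp p μ₁ ν + (∫⁻ y, eWp p μ₂ (κ y) ^ p ∂ν) ^ (1 / p) + ε := by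
        rw [add_add_add_comm, ← ENNReal.coe_add, add_halves]

end Wasserstein

section TransportPenalty

variable {d : ℕ} {p s t : ℝ} {φ : ℝ≥0 → ℝ≥0∞} {μ ν μ₁ μ₂ : Measure (Ed d)}
  {κ : SimpleFunc (Ed d) (Measure (Ed d))}

lemma lintegral_simpleFunc_ne_top {α : Type*} [MeasurableSpace α] {ν : Measure α}
    [IsFiniteMeasure ν] (σ : SimpleFunc α ℝ≥0∞) (hσ : ∀ a, σ a ≠ ∞) : ∫⁻ a, σ a ∂ν ≠ ∞ := by
  rw [SimpleFunc.lintegral_eq_lintegral]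
  exact ((SimpleFunc.finMeasSupp_iff_support.2 (measure_lt_top ν _)).lintegral_lt_top
    (ae_of_all ν hσ)).ne

lemma memPp_kernelConv (hp : 1 ≤ p) (hν : MemPp p ν) (hκ : ∀ y, MemPp p (κ y)) :
    MemPp p (kernelConv ν (simpleKernel κ)) := by
  have : 0 < p := by linarith
  have := hν.1
  have := isMarkovKernel_simpleKernel fun y => (hκ y).1
  have hκtop : ∫⁻ y, ∫⁻ z, (‖z‖₊ : ℝ≥0∞) ^ p ∂κ y ∂ν ≠ ∞ :=
    lintegral_simpleFunc_ne_top (κ.map fun m => ∫⁻ z, (‖z‖₊ : ℝ≥0∞) ^ p ∂m)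
      fun y => (hκ y).2.ne
  refine ⟨isProbabilityMeasure_kernelConv, ?_⟩
  have hroot : (∫⁻ w, (‖w‖₊ : ℝ≥0∞) ^ p ∂kernelConv ν (simpleKernel κ)) ^ (1 / p) < ∞ :=
    (lintegral_rpow_kernelConv_le (N := fun w => (‖w‖₊ : ℝ≥0∞)) (by fun_prop)
      (fun y z => by exact_mod_cast nnnorm_add_le y z) hp).trans_lt
      (add_lt_top.2 ⟨ENNReal.rpow_lt_top_of_nonneg (by positivity) hν.2.ne,
        ENNReal.rpow_lt_top_of_nonneg (by positivity) hκtop⟩)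
  exact (ENNReal.rpow_lt_top_iff_of_pos (by positivity)).1 hroot

/-- The penalty `φ_t(𝒲_p(μ, ν))` charged by `Sop` for replacing `μ` with `ν`. -/
def transportPenalty (p : ℝ) (φ : ℝ≥0 → ℝ≥0∞) (t : ℝ) (μ ν : Measure (Ed d)) : ℝ≥0∞ :=
  phit φ t (Wp p μ ν).toNNReal

lemma transportPenalty_self (hp : 0 < p) (hφ : φ 0 = 0) (t : ℝ) (μ : Measure (Ed d)) :
    transportPenalty p φ t μ μ = 0 := by
  rw [transportPenalty, toNNReal_Wp, eWp_self hp, toNNReal_zero, phit_zero_right hφ]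

lemma IsPenalty.transportPenalty_conv_kernelConv_le (hφ : IsPenalty p φ) (hp : 1 ≤ p) (hs : 0 ≤ s)
    (ht : 0 ≤ t) (hμ₁ : MemPp p μ₁) (hμ₂ : MemPp p μ₂) (hν : MemPp p ν)
    (hκ : ∀ y, MemPp p (κ y)) :
    transportPenalty p φ (s + t) (μ₁.conv μ₂) (kernelConv ν (simpleKernel κ)) ≤
      transportPenalty p φ s μ₁ ν + ∫⁻ y, transportPenalty p φ t μ₂ (κ y) ∂ν := by
  have hp0 : 0 < p := by linarith
  have := hμ₁.1
  have := hμ₂.1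
  have := hν.1
  have hA : eWp p μ₁ ν ≠ ∞ := eWp_ne_top hp hμ₁ hν
  have hB : ∫⁻ y, eWp p μ₂ (κ y) ^ p ∂ν ≠ ∞ :=
    lintegral_simpleFunc_ne_top (κ.map fun m => eWp p μ₂ m ^ p)
      fun y => ENNReal.rpow_ne_top_of_nonneg hp0.le (eWp_ne_top hp hμ₂ (hκ y))
  have hBroot : (∫⁻ y, eWp p μ₂ (κ y) ^ p ∂ν) ^ (1 / p) ≠ ∞ :=
    ENNReal.rpow_ne_top_of_nonneg (by positivity) hB
  have hlsc : LowerSemicontinuous fun x : ℝ≥0 => phit φ t (x ^ (1 / p)) :=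
    (lowerSemicontinuous_phit hφ.lsc t).comp (NNReal.continuous_rpow_const (by positivity))
  simp only [transportPenalty, toNNReal_Wp]
  calc phit φ (s + t) (eWp p (μ₁.conv μ₂) (kernelConv ν (simpleKernel κ))).toNNReal
      ≤ phit φ (s + t) ((eWp p μ₁ ν).toNNReal +
          ((∫⁻ y, eWp p μ₂ (κ y) ^ p ∂ν) ^ (1 / p)).toNNReal) := by
        rw [← toNNReal_add hA hBroot]
        exact monotone_phit hφ.mono _ (toNNReal_mono (add_ne_top.2 ⟨hA, hBroot⟩)
          (eWp_conv_kernelConv_le hp fun y => (hκ y).1))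
    _ ≤ phit φ s (eWp p μ₁ ν).toNNReal +
          phit φ t ((∫⁻ y, eWp p μ₂ (κ y) ^ p ∂ν) ^ (1 / p)).toNNReal :=
        hφ.phit_add_le hs ht _ _
    _ ≤ phit φ s (eWp p μ₁ ν).toNNReal +
          ∫⁻ y, phit φ t ((eWp p μ₂ (κ y) ^ p).toNNReal ^ (1 / p)) ∂ν := by
        gcongr
        rw [ENNReal.toNNReal_rpow]
        exact map_toNNReal_lintegral_le_lintegral_map (hφ.convexOn_phit_rpow hp0.ne' t) hlsc
          (κ.map fun m => eWp p μ₂ m ^ p).measurable.aemeasurable hB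
    _ = _ := by simp [← ENNReal.toNNReal_rpow, ← ENNReal.rpow_mul, hp0.ne']

end TransportPenalty

section BoundedUniformlyContinuous

/-- Bounded, uniformly continuous real functions: a class containing `C₀(ℝ^d)` which, unlike it, is
easily seen to be stable under `Sop`. -/
structure IsBUC {X : Type*} [UniformSpace X] (f : X → ℝ) : Prop where
  uniformContinuous : UniformContinuous f
  bounded : ∃ M, ∀ x, |f x| ≤ M

lemma isBUC_zeroAtInfty {X : Type*} [PseudoMetricSpace X] (f : C₀(X, ℝ)) : IsBUC f :=
  ⟨ZeroAtInftyContinuousMap.uniformContinuous f, ‖f‖, f.toBCF.norm_coe_le_norm⟩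

lemma abs_integral_le_of_abs_le {α : Type*} [MeasurableSpace α] (ν : Measure α)
    [IsProbabilityMeasure ν] {h : α → ℝ} {M : ℝ} (hM : ∀ a, |h a| ≤ M) : |∫ a, h a ∂ν| ≤ M := by
  simpa using norm_integral_le_of_norm_le_const (f := h) (ae_of_all ν hM)

lemma IsBUC.integrable {X : Type*} [PseudoMetricSpace X] [MeasurableSpace X]
    [OpensMeasurableSpace X] {f : X → ℝ} (hf : IsBUC f) (ν : Measure X) [IsFiniteMeasure ν] :
    Integrable f ν :=
  let ⟨M, hM⟩ := hf.bounded
  .of_bound hf.uniformContinuous.continuous.measurable.aestronglyMeasurable M (ae_of_all ν hM)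

lemma IsBUC.comp_add_left {X : Type*} [UniformSpace X] [AddGroup X] [IsUniformAddGroup X]
    {f : X → ℝ} (hf : IsBUC f) (x : X) : IsBUC fun y => f (x + y) :=
  ⟨hf.uniformContinuous.comp (uniformContinuous_const.add uniformContinuous_id),
    hf.bounded.imp fun _ hM _ => hM _⟩

lemma IsBUC.exists_abs_sub_le_add_mul {X : Type*} [PseudoMetricSpace X] {f : X → ℝ} (hf : IsBUC f)
    {ε : ℝ} (hε : 0 < ε) : ∃ L, 0 ≤ L ∧ ∀ a b, |f a - f b| ≤ ε + L * dist a b := by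
  obtain ⟨M, hM⟩ := hf.bounded
  obtain ⟨δ, hδ, hmod⟩ := Metric.uniformContinuous_iff.1 hf.uniformContinuous ε hε
  refine ⟨2 * |M| / δ, by positivity, fun a b => ?_⟩
  rcases lt_or_ge (dist a b) δ with hab | hab
  · exact (hmod hab).le.trans (le_add_of_nonneg_right (by positivity))
  · calc |f a - f b| ≤ |f a| + |f b| := abs_sub _ _
      _ ≤ |M| + |M| := add_le_add ((hM a).trans (le_abs_self M)) ((hM b).trans (le_abs_self M))
      _ = 2 * |M| / δ * δ := by field_simp; ring
      _ ≤ 2 * |M| / δ * dist a b := by gcongr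
      _ ≤ ε + 2 * |M| / δ * dist a b := le_add_of_nonneg_left hε.le

end BoundedUniformlyContinuous

section OneStepOperator

variable {d : ℕ} {p t : ℝ} {φ : ℝ≥0 → ℝ≥0∞} {m ν : Measure (Ed d)} {f g : Ed d → ℝ}
  {x y : Ed d}

/-- The measures that contribute to the supremum defining `Sop p φ m t`. -/
def IsAdmissible (p : ℝ) (φ : ℝ≥0 → ℝ≥0∞) (m : Measure (Ed d)) (t : ℝ) (ν : Measure (Ed d)) :
    Prop :=
  MemPp p ν ∧ transportPenalty p φ t m ν ≠ ∞

lemma Sop_add (f : Ed d → ℝ) (x y : Ed d) :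
    Sop p φ m t f (x + y) = Sop p φ m t (fun z => f (x + z)) y := by
  simp only [Sop, add_assoc]

lemma isAdmissible_self (hp : 0 < p) (hφ : φ 0 = 0) (hm : MemPp p m) (t : ℝ) :
    IsAdmissible p φ m t m :=
  ⟨hm, by simp [transportPenalty_self hp hφ]⟩

lemma le_Sop {M : ℝ} (hM : ∀ x, |f x| ≤ M) (hν : IsAdmissible p φ m t ν) :
    ∫ y, f (x + y) ∂ν - (transportPenalty p φ t m ν).toReal ≤ Sop p φ m t f x := by
  refine le_csSup ⟨M, ?_⟩ ⟨ν, hν.1, _, toReal_nonneg, (ofReal_toReal hν.2).ge, rfl⟩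
  rintro r ⟨ρ, hρ, c, hc, -, rfl⟩
  have := hρ.1
  linarith [le_of_abs_le (abs_integral_le_of_abs_le ρ fun y => hM (x + y))]

lemma Sop_le (hm : IsAdmissible p φ m t m) {r : ℝ}
    (h : ∀ ν, IsAdmissible p φ m t ν →
      ∫ y, f (x + y) ∂ν - (transportPenalty p φ t m ν).toReal ≤ r) :
    Sop p φ m t f x ≤ r := by
  refine csSup_le ⟨_, m, hm.1, _, toReal_nonneg, (ofReal_toReal hm.2).ge, rfl⟩ ?_
  rintro _ ⟨ν, hν, c, hc, hpen, rfl⟩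
  refine le_trans ?_ (h ν ⟨hν, ne_top_of_le_ne_top ofReal_ne_top hpen⟩)
  gcongr
  exact toReal_le_of_le_ofReal hc hpen

lemma exists_isAdmissible_Sop_le_add (hm : IsAdmissible p φ m t m) (f : Ed d → ℝ) (x : Ed d)
    {ε : ℝ} (hε : 0 < ε) : ∃ ν, IsAdmissible p φ m t ν ∧
      Sop p φ m t f x ≤ ∫ y, f (x + y) ∂ν - (transportPenalty p φ t m ν).toReal + ε := by
  by_contra! h
  have hle : Sop p φ m t f x ≤ Sop p φ m t f x - ε :=
    Sop_le hm fun ν hν => by linarith [h ν hν]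
  linarith

lemma Sop_le_Sop_add (hm : IsAdmissible p φ m t m) (hf : IsBUC f) (hg : IsBUC g) {C : ℝ}
    (h : ∀ z, f (x + z) ≤ g (y + z) + C) : Sop p φ m t f x ≤ Sop p φ m t g y + C := by
  obtain ⟨M, hM⟩ := hg.bounded
  refine Sop_le hm fun ν hν => ?_
  have := hν.1.1
  have hgν : Integrable (fun z => g (y + z)) ν := (hg.comp_add_left y).integrable ν
  have hint : ∫ z, f (x + z) ∂ν ≤ ∫ z, g (y + z) ∂ν + C :=
    calc ∫ z, f (x + z) ∂ν ≤ ∫ z, (g (y + z) + C) ∂ν :=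
          integral_mono ((hf.comp_add_left x).integrable ν) (hgν.add (integrable_const C)) h
      _ = ∫ z, g (y + z) ∂ν + C := by simp [integral_add hgν (integrable_const C)]
  linarith [le_Sop (x := y) hM hν]

lemma Sop_mono (hm : IsAdmissible p φ m t m) (hf : IsBUC f) (hg : IsBUC g) (h : ∀ z, f z ≤ g z)
    (x : Ed d) : Sop p φ m t f x ≤ Sop p φ m t g x := by
  simpa using Sop_le_Sop_add (C := 0) hm hf hg fun z => by simpa using h (x + z)

lemma abs_Sop_sub_le (hm : IsAdmissible p φ m t m) (hf : IsBUC f) (hg : IsBUC g) {C : ℝ}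
    (h : ∀ z, |f (x + z) - g (y + z)| ≤ C) (z : Ed d) :
    |Sop p φ m t f (x + z) - Sop p φ m t g (y + z)| ≤ C := by
  have hle : Sop p φ m t f (x + z) ≤ Sop p φ m t g (y + z) + C :=
    Sop_le_Sop_add hm hf hg fun w => by
      rw [add_assoc, add_assoc]
      linarith [le_of_abs_le (h (z + w))]
  have hge : Sop p φ m t g (y + z) ≤ Sop p φ m t f (x + z) + C :=
    Sop_le_Sop_add hm hg hf fun w => by
      rw [add_assoc, add_assoc]
      linarith [neg_le_of_abs_le (h (z + w))]
  rw [abs_sub_le_iff]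
  constructor <;> linarith

lemma isBUC_Sop (hm : IsAdmissible p φ m t m) (hf : IsBUC f) : IsBUC (Sop p φ m t f) := by
  obtain ⟨M, hM⟩ := hf.bounded
  have hint (ν : Measure (Ed d)) (hν : IsAdmissible p φ m t ν) (x : Ed d) :
      |∫ y, f (x + y) ∂ν| ≤ M :=
    have := hν.1.1
    abs_integral_le_of_abs_le ν fun y => hM (x + y)
  constructor
  · refine Metric.uniformContinuous_iff.2 fun ε hε => ?_
    obtain ⟨δ, hδ, hmod⟩ :=
      Metric.uniformContinuous_iff.1 hf.uniformContinuous (ε / 2) (half_pos hε)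
    refine ⟨δ, hδ, fun {a b} hab => lt_of_le_of_lt ?_ (half_lt_self hε)⟩
    simpa using! abs_Sop_sub_le hm hf hf
      (fun z => (hmod (a := a + z) (b := b + z) (by simpa using hab)).le) 0
  · refine ⟨M + (transportPenalty p φ t m m).toReal, fun x => abs_le.2 ⟨?_, ?_⟩⟩
    · linarith [le_Sop (x := x) hM hm, neg_le_of_abs_le (hint m hm x)]
    · refine Sop_le hm fun ν hν => ?_
      linarith [le_of_abs_le (hint ν hν x), toReal_nonneg (a := transportPenalty p φ t m ν),
        toReal_nonneg (a := transportPenalty p φ t m m)]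

lemma Sop_le_integral_sub_transportPenalty_add {ρ : Measure (Ed d)} (hm : IsAdmissible p φ m t m)
    (hf : IsBUC f) (hρ : IsProbabilityMeasure ρ) {ε C : ℝ} (hC : ∀ z, |f (x + z) - f (y + z)| ≤ C)
    (hx : Sop p φ m t f x ≤ ∫ z, f (x + z) ∂ρ - (transportPenalty p φ t m ρ).toReal + ε) :
    Sop p φ m t f y ≤
      ∫ z, f (y + z) ∂ρ - (transportPenalty p φ t m ρ).toReal + (ε + 2 * C) := by
  have hSop : |Sop p φ m t f x - Sop p φ m t f y| ≤ C := by
    simpa using abs_Sop_sub_le hm hf hf hC 0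
  have hint : |∫ z, f (x + z) ∂ρ - ∫ z, f (y + z) ∂ρ| ≤ C := by
    rw [← integral_sub ((hf.comp_add_left x).integrable ρ) ((hf.comp_add_left y).integrable ρ)]
    exact abs_integral_le_of_abs_le ρ hC
  linarith [neg_le_of_abs_le hSop, le_of_abs_le hint]

end OneStepOperator

section Composition

variable {d : ℕ} {p s t : ℝ} {φ : ℝ≥0 → ℝ≥0∞} {m m₁ m₂ ν : Measure (Ed d)} {f : Ed d → ℝ}
  {κ : SimpleFunc (Ed d) (Measure (Ed d))}

lemma exists_simpleFunc_integral_norm_sub_le (hp : 1 ≤ p) (hν : MemPp p ν) {η : ℝ} (hη : 0 < η) :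
    ∃ σ : SimpleFunc (Ed d) (Ed d), Integrable (fun y => ‖σ y - y‖) ν ∧
      ∫ y, ‖σ y - y‖ ∂ν ≤ η := by
  have := hν.1
  have hid : MemLp id 1 ν := by
    refine MemLp.mono_exponent (q := ENNReal.ofReal p) ?_ (by simpa using hp)
    refine ⟨aestronglyMeasurable_id, ?_⟩
    rw [eLpNorm_lt_top_iff_lintegral_rpow_enorm_lt_top (by simpa using by linarith) ofReal_ne_top,
      toReal_ofReal (by linarith)]
    exact hν.2
  obtain ⟨σ, hσ, hσLp⟩ := hid.exists_simpleFunc_eLpNorm_sub_lt one_ne_top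
    (ENNReal.ofReal_pos.2 hη).ne'
  have hint : Integrable (fun y => σ y - y) ν := memLp_one_iff_integrable.1 (hσLp.sub hid)
  refine ⟨σ, hint.norm, ?_⟩
  rw [← ENNReal.ofReal_le_ofReal_iff hη.le, ofReal_integral_norm_eq_lintegral_enorm hint,
    ← eLpNorm_one_eq_lintegral_enorm]
  exact (eLpNorm_sub_comm id σ 1 ν ▸ hσ).le

lemma integrable_integral_simpleFunc [IsFiniteMeasure ν]
    (hκ : ∀ y, IsProbabilityMeasure (κ y)) (hf : IsBUC f) :
    Integrable (fun y => ∫ z, f (y + z) ∂κ y) ν := by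
  obtain ⟨M, hM⟩ := hf.bounded
  have := isMarkovKernel_simpleKernel hκ
  have hmeas : StronglyMeasurable fun y => ∫ z, f (y + z) ∂simpleKernel κ y :=
    StronglyMeasurable.integral_kernel_prod_right (f := fun y z => f (y + z))
      (hf.uniformContinuous.continuous.comp continuous_add).stronglyMeasurable
  exact .of_bound hmeas.aestronglyMeasurable M
    (ae_of_all ν fun y => abs_integral_le_of_abs_le (κ y) fun z => hM (y + z))

lemma integrable_toReal_transportPenalty_simpleFunc [IsFiniteMeasure ν]
    (κ : SimpleFunc (Ed d) (Measure (Ed d))) :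
    Integrable (fun y => (transportPenalty p φ t m (κ y)).toReal) ν :=
  (κ.map fun ρ => (transportPenalty p φ t m ρ).toReal).integrable_of_isFiniteMeasure

lemma exists_simpleFunc_isAdmissible_integral_Sop_le (hp : 1 ≤ p) (hm : IsAdmissible p φ m t m)
    (hν : MemPp p ν) (hf : IsBUC f) {ε : ℝ} (hε : 0 < ε) :
    ∃ κ : SimpleFunc (Ed d) (Measure (Ed d)), (∀ y, IsAdmissible p φ m t (κ y)) ∧
      ∫ y, Sop p φ m t f y ∂ν ≤
        ∫ y, (∫ z, f (y + z) ∂κ y - (transportPenalty p φ t m (κ y)).toReal) ∂ν + ε := by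
  have := hν.1
  have hε4 : 0 < ε / 4 := by positivity
  obtain ⟨L, hL, hmod⟩ := hf.exists_abs_sub_le_add_mul hε4
  choose κ₀ hκ₀ hopt using fun y => exists_isAdmissible_Sop_le_add hm f y hε4
  obtain ⟨σ, hσint, hσ⟩ := exists_simpleFunc_integral_norm_sub_le hp hν
    (show 0 < ε / 4 / (2 * L + 1) by positivity)
  refine ⟨σ.map κ₀, fun y => hκ₀ (σ y), ?_⟩
  set J : Ed d → ℝ := fun y =>
    ∫ z, f (y + z) ∂κ₀ (σ y) - (transportPenalty p φ t m (κ₀ (σ y))).toReal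
  have hJ : Integrable J ν :=
    (integrable_integral_simpleFunc (κ := σ.map κ₀) (fun y => (hκ₀ (σ y)).1.1) hf).sub
      (integrable_toReal_transportPenalty_simpleFunc (σ.map κ₀))
  have hSop (y : Ed d) : Sop p φ m t f y ≤ J y + (3 * (ε / 4) + 2 * L * ‖σ y - y‖) := by
    have hy := Sop_le_integral_sub_transportPenalty_add (y := y) hm hf (hκ₀ (σ y)).1.1
      (fun z => by simpa [dist_eq_norm] using hmod (σ y + z) (y + z)) (hopt (σ y))
    linarith
  have herr : Integrable (fun y => 3 * (ε / 4) + 2 * L * ‖σ y - y‖) ν :=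
    (integrable_const _).add (hσint.const_mul _)
  calc ∫ y, Sop p φ m t f y ∂ν
      ≤ ∫ y, (J y + (3 * (ε / 4) + 2 * L * ‖σ y - y‖)) ∂ν :=
        integral_mono ((isBUC_Sop hm hf).integrable ν) (hJ.add herr) hSop
    _ = ∫ y, J y ∂ν + (3 * (ε / 4) + 2 * L * ∫ y, ‖σ y - y‖ ∂ν) := by
        rw [integral_add hJ herr, integral_add (integrable_const _) (hσint.const_mul _)]
        simp [integral_const_mul]
    _ ≤ ∫ y, J y ∂ν + (3 * (ε / 4) + (2 * L + 1) * (ε / 4 / (2 * L + 1))) := by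
        gcongr
        linarith
    _ = ∫ y, J y ∂ν + ε := by
        field_simp
        ring

lemma lintegral_transportPenalty_simpleFunc_ne_top [IsFiniteMeasure ν]
    (hκ : ∀ y, IsAdmissible p φ m t (κ y)) : ∫⁻ y, transportPenalty p φ t m (κ y) ∂ν ≠ ∞ :=
  lintegral_simpleFunc_ne_top (κ.map (transportPenalty p φ t m)) fun y => (hκ y).2

lemma isAdmissible_conv_kernelConv (hp : 1 ≤ p) (hφ : IsPenalty p φ) (hs : 0 ≤ s) (ht : 0 ≤ t)
    (hm₁ : MemPp p m₁) (hm₂ : MemPp p m₂) (hν : IsAdmissible p φ m₁ s ν)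
    (hκ : ∀ y, IsAdmissible p φ m₂ t (κ y)) :
    IsAdmissible p φ (m₁.conv m₂) (s + t) (kernelConv ν (simpleKernel κ)) :=
  have := hν.1.1
  ⟨memPp_kernelConv hp hν.1 fun y => (hκ y).1, ne_top_of_le_ne_top
    (add_ne_top.2 ⟨hν.2, lintegral_transportPenalty_simpleFunc_ne_top hκ⟩)
    (hφ.transportPenalty_conv_kernelConv_le hp hs ht hm₁ hm₂ hν.1 fun y => (hκ y).1)⟩

lemma toReal_transportPenalty_conv_kernelConv_le (hp : 1 ≤ p) (hφ : IsPenalty p φ) (hs : 0 ≤ s)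
    (ht : 0 ≤ t) (hm₁ : MemPp p m₁) (hm₂ : MemPp p m₂) (hν : IsAdmissible p φ m₁ s ν)
    (hκ : ∀ y, IsAdmissible p φ m₂ t (κ y)) :
    (transportPenalty p φ (s + t) (m₁.conv m₂) (kernelConv ν (simpleKernel κ))).toReal ≤
      (transportPenalty p φ s m₁ ν).toReal +
        ∫ y, (transportPenalty p φ t m₂ (κ y)).toReal ∂ν := by
  have := hν.1.1
  have hκtop := lintegral_transportPenalty_simpleFunc_ne_top (ν := ν) hκ
  have hmeas : AEMeasurable (fun y => transportPenalty p φ t m₂ (κ y)) ν :=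
    (κ.map (transportPenalty p φ t m₂)).measurable.aemeasurable
  rw [integral_toReal hmeas (ae_of_all ν fun y => (hκ y).2.lt_top), ← toReal_add hν.2 hκtop]
  exact toReal_mono (add_ne_top.2 ⟨hν.2, hκtop⟩)
    (hφ.transportPenalty_conv_kernelConv_le hp hs ht hm₁ hm₂ hν.1 fun y => (hκ y).1)

lemma integral_sub_transportPenalty_le_Sop_conv (hp : 1 ≤ p) (hφ : IsPenalty p φ) (hs : 0 ≤ s)
    (ht : 0 ≤ t) (hm₁ : MemPp p m₁) (hm₂ : MemPp p m₂) (hν : IsAdmissible p φ m₁ s ν)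
    (hκ : ∀ y, IsAdmissible p φ m₂ t (κ y)) (hf : IsBUC f) (x : Ed d) :
    ∫ y, (∫ z, f (x + (y + z)) ∂κ y - (transportPenalty p φ t m₂ (κ y)).toReal) ∂ν -
        (transportPenalty p φ s m₁ ν).toReal ≤
      Sop p φ (m₁.conv m₂) (s + t) f x := by
  obtain ⟨M, hM⟩ := hf.bounded
  have hglued := isAdmissible_conv_kernelConv hp hφ hs ht hm₁ hm₂ hν hκ
  have := hν.1.1
  have := hglued.1.1
  have := isMarkovKernel_simpleKernel fun y => (hκ y).1.1
  have hint : ∫ w, f (x + w) ∂kernelConv ν (simpleKernel κ) =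
      ∫ y, ∫ z, f (x + (y + z)) ∂κ y ∂ν :=
    integral_kernelConv ((hf.comp_add_left x).integrable _)
  rw [integral_sub (integrable_integral_simpleFunc (fun y => (hκ y).1.1) (hf.comp_add_left x))
    (integrable_toReal_transportPenalty_simpleFunc κ)]
  linarith [le_Sop (x := x) hM hglued,
    toReal_transportPenalty_conv_kernelConv_le hp hφ hs ht hm₁ hm₂ hν hκ]

lemma Sop_Sop_le_Sop_conv (hp : 1 ≤ p) (hφ : IsPenalty p φ) (hs : 0 ≤ s) (ht : 0 ≤ t)
    (hm₁ : MemPp p m₁) (hm₂ : MemPp p m₂) (hf : IsBUC f) (x : Ed d) :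
    Sop p φ m₁ s (Sop p φ m₂ t f) x ≤ Sop p φ (m₁.conv m₂) (s + t) f x := by
  have hp0 : 0 < p := by linarith
  refine Sop_le (isAdmissible_self hp0 hφ.map_zero hm₁ s) fun ν hν => ?_
  refine le_of_forall_pos_le_add fun ε hε => ?_
  obtain ⟨κ, hκ, hsel⟩ := exists_simpleFunc_isAdmissible_integral_Sop_le hp
    (isAdmissible_self hp0 hφ.map_zero hm₂ t) hν.1 (hf.comp_add_left x) hε
  simp only [Sop_add f x]
  linarith [integral_sub_transportPenalty_le_Sop_conv hp hφ hs ht hm₁ hm₂ hν hκ hf x]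

end Composition

section Iterates

variable {d : ℕ} {p s t a : ℝ} {φ : ℝ≥0 → ℝ≥0∞} {m : Measure (Ed d)} {μ : ℝ → Measure (Ed d)}
  {f g : Ed d → ℝ} {x y : Ed d}

lemma isBUC_iterate_Sop (hm : IsAdmissible p φ m t m) (hf : IsBUC f) (k : ℕ) :
    IsBUC ((Sop p φ m t)^[k] f) :=
  Function.Iterate.rec IsBUC hf (fun _ => isBUC_Sop hm) k

lemma abs_iterate_Sop_sub_le (hm : IsAdmissible p φ m t m) (hf : IsBUC f) (hg : IsBUC g) {C : ℝ}
    (h : ∀ z, |f (x + z) - g (y + z)| ≤ C) (k : ℕ) (z : Ed d) :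
    |(Sop p φ m t)^[k] f (x + z) - (Sop p φ m t)^[k] g (y + z)| ≤ C := by
  induction k generalizing z with
  | zero => exact h z
  | succ k ih =>
    rw [Function.iterate_succ_apply', Function.iterate_succ_apply']
    exact abs_Sop_sub_le hm (isBUC_iterate_Sop hm hf k) (isBUC_iterate_Sop hm hg k) ih z

lemma IsConvSemigroup.isAdmissible (hμ : IsConvSemigroup p μ) (hp : 0 < p) (hφ : φ 0 = 0)
    (ht : 0 ≤ t) : IsAdmissible p φ (μ t) t (μ t) :=
  isAdmissible_self hp hφ (hμ.2.2 t ht) t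

lemma IsConvSemigroup.Sop_Sop_le (hμ : IsConvSemigroup p μ) (hp : 1 ≤ p) (hφ : IsPenalty p φ)
    (hs : 0 ≤ s) (ht : 0 ≤ t) (hf : IsBUC f) (x : Ed d) :
    Sop p φ (μ s) s (Sop p φ (μ t) t f) x ≤ Sop p φ (μ (s + t)) (s + t) f x :=
  hμ.2.1 s t hs ht ▸ Sop_Sop_le_Sop_conv hp hφ hs ht (hμ.2.2 s hs) (hμ.2.2 t ht) hf x

lemma IsConvSemigroup.iterate_Sop_two_mul_le (hμ : IsConvSemigroup p μ) (hp : 1 ≤ p)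
    (hφ : IsPenalty p φ) (ha : 0 ≤ a) (hf : IsBUC f) (hg : IsBUC g) (hfg : ∀ x, f x ≤ g x)
    (k : ℕ) (x : Ed d) :
    (Sop p φ (μ a) a)^[2 * k] f x ≤ (Sop p φ (μ (a + a)) (a + a))^[k] g x := by
  have hp0 : 0 < p := by linarith
  have hadm := hμ.isAdmissible hp0 hφ.map_zero ha
  have hadm2 := hμ.isAdmissible hp0 hφ.map_zero (add_nonneg ha ha)
  induction k generalizing x with
  | zero => exact hfg x
  | succ k ih =>
    rw [Nat.mul_succ, Function.iterate_succ_apply', Function.iterate_succ_apply',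
      Function.iterate_succ_apply']
    have hfk := isBUC_iterate_Sop hadm hf (2 * k)
    exact (hμ.Sop_Sop_le hp hφ ha ha hfk x).trans
      (Sop_mono hadm2 hfk (isBUC_iterate_Sop hadm2 hg k) ih x)

lemma nat_floor_two_mul {K : Type*} [Field K] [LinearOrder K] [IsStrictOrderedRing K]
    [FloorSemiring K] {r : K} (hr : 0 ≤ r) :
    ⌊2 * r⌋₊ = 2 * ⌊r⌋₊ ∨ ⌊2 * r⌋₊ = 2 * ⌊r⌋₊ + 1 := by
  have hlow := Nat.floor_le hr
  have hupp := Nat.lt_floor_add_one r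
  rw [Nat.floor_eq_iff (by positivity), Nat.floor_eq_iff (by positivity)]
  push_cast
  rcases lt_or_ge (2 * r) (2 * ⌊r⌋₊ + 1) with hlt | hge
  · exact .inl ⟨by linarith, hlt⟩
  · exact .inr ⟨hge, by linarith⟩

lemma sub_nat_floor_mul_mul_inv_nonneg {N : ℝ} (hN : 0 < N) (ht : 0 ≤ t) :
    0 ≤ t - ⌊N * t⌋₊ * N⁻¹ := by
  rw [sub_nonneg, ← div_eq_mul_inv, div_le_iff₀' hN]
  exact Nat.floor_le (by positivity)

lemma IsConvSemigroup.abs_SiterN_sub_le (hμ : IsConvSemigroup p μ) (hp : 0 < p) (hφ : φ 0 = 0)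
    (ht : 0 ≤ t) (hf : IsBUC f) (hg : IsBUC g) {C : ℝ} (h : ∀ z, |f (x + z) - g (y + z)| ≤ C)
    (n : ℕ) : |SiterN p φ μ n t f x - SiterN p φ μ n t g y| ≤ C := by
  have hstep := hμ.isAdmissible hp hφ (show 0 ≤ ((2 : ℝ) ^ n)⁻¹ by positivity)
  have hrem := hμ.isAdmissible hp hφ
    (sub_nat_floor_mul_mul_inv_nonneg (show 0 < (2 : ℝ) ^ n by positivity) ht)
  simpa [SiterN] using abs_iterate_Sop_sub_le hstep (isBUC_Sop hrem hf) (isBUC_Sop hrem hg)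
    (abs_Sop_sub_le hrem hf hg h) ⌊(2 : ℝ) ^ n * t⌋₊ 0

lemma IsConvSemigroup.SiterN_succ_le (hμ : IsConvSemigroup p μ) (hp : 1 ≤ p) (hφ : IsPenalty p φ)
    (ht : 0 ≤ t) (hf : IsBUC f) (n : ℕ) (x : Ed d) :
    SiterN p φ μ (n + 1) t f x ≤ SiterN p φ μ n t f x := by
  have hp0 : 0 < p := by linarith
  have hrem := sub_nat_floor_mul_mul_inv_nonneg (show 0 < (2 : ℝ) ^ n by positivity) ht
  have hrem' := sub_nat_floor_mul_mul_inv_nonneg (show 0 < (2 : ℝ) ^ (n + 1) by positivity) ht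
  have hhalf : ((2 : ℝ) ^ n)⁻¹ = ((2 : ℝ) ^ (n + 1))⁻¹ + ((2 : ℝ) ^ (n + 1))⁻¹ := by
    field_simp
    ring
  have hfloor := nat_floor_two_mul (show 0 ≤ (2 : ℝ) ^ n * t by positivity)
  rw [← mul_assoc, ← pow_succ'] at hfloor
  have ha : 0 ≤ ((2 : ℝ) ^ (n + 1))⁻¹ := by positivity
  unfold SiterN
  rw [hhalf] at hrem ⊢
  generalize ((2 : ℝ) ^ (n + 1))⁻¹ = a at *
  generalize ⌊(2 : ℝ) ^ n * t⌋₊ = k at *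
  generalize ⌊(2 : ℝ) ^ (n + 1) * t⌋₊ = k' at *
  have hBUC {r : ℝ} (hr : 0 ≤ r) : IsBUC (Sop p φ (μ r) r f) :=
    isBUC_Sop (hμ.isAdmissible hp0 hφ.map_zero hr) hf
  rcases hfloor with rfl | rfl
  · have hr : t - (2 * k : ℕ) * a = t - k * (a + a) := by push_cast; ring
    rw [hr]
    exact hμ.iterate_Sop_two_mul_le hp hφ ha (hBUC hrem) (hBUC hrem) (fun _ => le_rfl) k x
  · have hr : t - k * (a + a) = a + (t - (2 * k + 1 : ℕ) * a) := by push_cast; ring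
    rw [hr] at hrem ⊢
    exact hμ.iterate_Sop_two_mul_le hp hφ ha
      (isBUC_Sop (hμ.isAdmissible hp0 hφ.map_zero ha) (hBUC hrem')) (hBUC hrem)
      (hμ.Sop_Sop_le hp hφ ha hrem' hf) k x

end Iterates

theorem stmt_6_general {d : ℕ} {p : ℝ} (hp : 1 ≤ p) {φ : ℝ≥0 → ℝ≥0∞} (hφ : IsPenalty p φ)
    {μ : ℝ → Measure (Ed d)} (hμ : IsConvSemigroup p μ) {f g : Ed d → ℝ} (hf : IsBUC f)
    (hg : IsBUC g) {t : ℝ} (ht : 0 ≤ t) (n : ℕ) :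
    (∀ x, SiterN p φ μ (n + 1) t f x ≤ SiterN p φ μ n t f x) ∧
    (∀ C, (∀ x, |f x - g x| ≤ C) → ∀ x, |SiterN p φ μ n t f x - SiterN p φ μ n t g x| ≤ C) ∧
    (∀ ε δ : ℝ, (∀ x y : Ed d, ‖x - y‖ ≤ δ → |f x - f y| ≤ ε) →
      ∀ x y : Ed d, ‖x - y‖ ≤ δ → |SiterN p φ μ n t f x - SiterN p φ μ n t f y| ≤ ε) := by
  have hp0 : 0 < p := by linarith
  refine ⟨hμ.SiterN_succ_le hp hφ ht hf n, fun C hC x => ?_, fun ε δ hmod x y hxy => ?_⟩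
  · exact hμ.abs_SiterN_sub_le hp0 hφ.map_zero ht hf hg (fun z => hC (x + z)) n
  · exact hμ.abs_SiterN_sub_le hp0 hφ.map_zero ht hf hf
      (fun z => hmod (x + z) (y + z) (by rwa [add_sub_add_right_eq_sub])) n

/-- monotonicity in `n`, contractivity, and preservation of the modulus of
continuity for the iterated operators `𝒮ⁿ(t)`. -/
theorem stmt_6 (d : ℕ) (hd : 1 ≤ d) (p : ℝ) (hp : 1 < p)
    (φ : ℝ≥0 → ℝ≥0∞) (hφ : IsPenalty p φ)
    (μ : ℝ → Measure (Ed d)) (hμ : IsConvSemigroup p μ)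
    (f g : C₀(Ed d, ℝ)) (t : ℝ) (ht : 0 ≤ t) (n : ℕ) :
    (∀ x, SiterN p φ μ (n + 1) t (⇑f) x ≤ SiterN p φ μ n t (⇑f) x) ∧
    (∀ x, |SiterN p φ μ n t (⇑f) x - SiterN p φ μ n t (⇑g) x| ≤ ‖f - g‖) ∧
    (∀ ε δ : ℝ, 0 < ε → 0 < δ →
      (∀ x y : Ed d, ‖x - y‖ ≤ δ → |f x - f y| ≤ ε) →
      ∀ x y : Ed d, ‖x - y‖ ≤ δ →
        |SiterN p φ μ n t (⇑f) x - SiterN p φ μ n t (⇑f) y| ≤ ε) := by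
  obtain ⟨hmono, hcontr, hmod⟩ :=
    stmt_6_general hp.le hφ hμ (isBUC_zeroAtInfty f) (isBUC_zeroAtInfty g) ht n
  exact ⟨hmono, hcontr _ (f - g).toBCF.norm_coe_le_norm, fun ε δ _ _ => hmod ε δ⟩
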